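/- arXiv:1511.03993 — 2 statements merged into one kernel-verified Lean document; each statement's English description precedes it below -/
import Mathlib

section
/- For each choice of sign e in {-1, +1}, the sextuple (u0, u1, u2, u3, x2, x3) given by x3 = (90 + e*sqrt(3585))/105, u0 = u1 = x3, u2 = u3 = (90 - e*sqrt(3585))/129 and x2 = 1 satisfies g0 = g1 = g2 = g3 = g4 = g5 = 0. (These are the two exact naturally reductive Einstein solutions on E6(3) in the case u2 = u3, coming from the roots of 105*x3^2 - 180*x3 + 43 = 0 together with 35*x3 + 43*u2 - 60 = 0.) -/
noncomputable def g0 (u0 u1 u2 u3 x2 x3 : ℝ) : ℝ :=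
  3*u0*u1*x2 ^ 2*x3 ^ 2 + 3*u0*u1*x2 ^ 2 + 6*u0*u1*x3 ^ 2 - 9*u1 ^ 2*x2 ^ 2*x3 ^ 2 - u1 ^ 2*x2 ^ 2 - 2*x2 ^ 2*x3 ^ 2

noncomputable def g1 (u0 u1 u2 u3 x2 x3 : ℝ) : ℝ :=
  9*u1 ^ 2*u2*x2 ^ 2*x3 ^ 2 + u1 ^ 2*u2*x2 ^ 2 - 6*u1*u2 ^ 2*x2 ^ 2*x3 ^ 2 - 3*u1*u2 ^ 2*x3 ^ 2 - 3*u1*x2 ^ 2*x3 ^ 2 + 2*u2*x2 ^ 2*x3 ^ 2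

noncomputable def g2 (u0 u1 u2 u3 x2 x3 : ℝ) : ℝ :=
  (u2 - u3)*(2*u2*u3*x2 ^ 2 + u2*u3 - x2 ^ 2)

noncomputable def g3 (u0 u1 u2 u3 x2 x3 : ℝ) : ℝ :=
  u0*u3*x2 ^ 2*x3 + 9*u1*u3*x2 ^ 2*x3 + 16*u2*u3*x2 ^ 2*x3 + 52*u3 ^ 2*x2 ^ 2*x3 + 18*u3 ^ 2*x3 + 24*u3*x2 ^ 3*x3 + 6*u3*x2 ^ 3 - 144*u3*x2 ^ 2*x3 + 6*u3*x2*x3 ^ 2 - 6*u3*x2 + 18*x2 ^ 2*x3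

noncomputable def g4 (u0 u1 u2 u3 x2 x3 : ℝ) : ℝ :=
  -u0*x2 ^ 2*x3 + 4*u0*x3 - 9*u1*x2 ^ 2*x3 - 16*u2*x2 ^ 2*x3 + 16*u2*x3 - 16*u3*x2 ^ 2*x3 + 16*u3*x3 - 48*x2 ^ 3*x3 - 18*x2 ^ 3 + 144*x2 ^ 2*x3 + 6*x2*x3 ^ 2 - 96*x2*x3 + 18*x2

noncomputable def g5 (u0 u1 u2 u3 x2 x3 : ℝ) : ℝ :=
  9*u0*x2 ^ 2 - 4*u0*x3 ^ 2 + 9*u1*x2 ^ 2 - 16*u2*x3 ^ 2 - 16*u3*x3 ^ 2 + 24*x2 ^ 3*x3 ^ 2 + 66*x2 ^ 3*x3 - 144*x2 ^ 2*x3 - 66*x2*x3 ^ 3 + 96*x2*x3 ^ 2 + 42*x2*x3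

/-!
On the slice `u0 = u1 = x3 = x`, `u2 = u3 = w`, `x2 = 1` the polynomials `g0`, `g2`, `g4` vanish
identically, while `g1`, `g3`, `g5` lie in the ideal generated by `3 * x * w - 1` and
`35 * x + 43 * w - 60`. Eliminating `w` from these two generators gives
`105 * x ^ 2 - 180 * x + 43 = 0`, whose roots are `(90 ± √3585) / 105`.
-/

lemma sq_sign_mul_sqrt {e a : ℝ} (he : e = -1 ∨ e = 1) (ha : 0 ≤ a) : (e * √a) ^ 2 = a := by
  rw [mul_pow, Real.sq_sqrt ha, sq_eq_one_iff.mpr he.symm, one_mul]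

lemma three_mul_mul_eq_one {K : Type*} [Field K] [CharZero K] {s : K} (hs : s ^ 2 = 3585) :
    3 * ((90 + s) / 105) * ((90 - s) / 129) = 1 := by
  linear_combination (-1 / 4515) * hs

lemma thirtyFive_mul_add_fortyThree_mul_eq_sixty {K : Type*} [Field K] [CharZero K] (s : K) :
    35 * ((90 + s) / 105) + 43 * ((90 - s) / 129) = 60 := by
  ring

namespace NaturallyReductive

lemma g0_eq_zero (x u2 u3 : ℝ) : g0 x x u2 u3 1 x = 0 := by
  unfold g0
  ring

lemma g1_eq_mul (x u2 u3 : ℝ) :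
    g1 x x u2 u3 1 x = 3 * x ^ 2 * (x - u2) * (3 * x * u2 - 1) := by
  unfold g1
  ring

lemma g2_eq_zero (u0 u1 w x2 x3 : ℝ) : g2 u0 u1 w w x2 x3 = 0 := by
  unfold g2
  ring

lemma g3_eq_mul (x w : ℝ) :
    g3 x x w w 1 x = 2 * x * (w * (35 * x + 43 * w - 60) - 9 * (3 * x * w - 1)) := by
  unfold g3
  ring

lemma g4_eq_zero (x u2 u3 : ℝ) : g4 x x u2 u3 1 x = 0 := by
  unfold g4
  ring

lemma g5_eq_mul (x w : ℝ) :
    g5 x x w w 1 x = -2 * x * (x * (35 * x + 43 * w - 60) - 9 * (3 * x * w - 1)) := by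
  unfold g5
  ring

theorem einstein_equations {x w : ℝ} (hmul : 3 * x * w = 1) (hadd : 35 * x + 43 * w = 60) :
    g0 x x w w 1 x = 0 ∧ g1 x x w w 1 x = 0 ∧ g2 x x w w 1 x = 0 ∧
      g3 x x w w 1 x = 0 ∧ g4 x x w w 1 x = 0 ∧ g5 x x w w 1 x = 0 := by
  have hg1 : g1 x x w w 1 x = 0 := by rw [g1_eq_mul, hmul, sub_self, mul_zero]
  have hg3 : g3 x x w w 1 x = 0 := by rw [g3_eq_mul, hmul, hadd]; ring
  have hg5 : g5 x x w w 1 x = 0 := by rw [g5_eq_mul, hmul, hadd]; ring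
  exact ⟨g0_eq_zero x w w, hg1, g2_eq_zero x x w 1 x, hg3, g4_eq_zero x w w, hg5⟩

end NaturallyReductive

theorem stmt17 :
    ∀ e : ℝ, (e = -1 ∨ e = 1) →
      ∀ x3 u u2 x2 : ℝ,
        x3 = (90 + e * Real.sqrt 3585) / 105 →
        u = x3 →
        u2 = (90 - e * Real.sqrt 3585) / 129 →
        x2 = 1 →
        (g0 u u u2 u2 x2 x3 = 0 ∧ g1 u u u2 u2 x2 x3 = 0 ∧ g2 u u u2 u2 x2 x3 = 0 ∧ g3 u u u2 u2 x2 x3 = 0 ∧ g4 u u u2 u2 x2 x3 = 0 ∧ g5 u u u2 u2 x2 x3 = 0) := by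
  rintro e he x3 u w x2 hx rfl hw rfl
  have hs : (e * √3585) ^ 2 = 3585 := sq_sign_mul_sqrt he (by norm_num)
  have hmul : 3 * u * w = 1 := hx ▸ hw ▸ three_mul_mul_eq_one hs
  have hadd : 35 * u + 43 * w = 60 :=
    hx ▸ hw ▸ thirtyFive_mul_add_fortyThree_mul_eq_sixty (e * √3585)
  exact NaturallyReductive.einstein_equations hmul hadd
end

section
/- There exist five sextuples of real numbers (u0, u1, u2, u3, x2, x3) with u2 = u3 satisfying g0 = g1 = g2 = g3 = g4 = g5 = 0, one in each of the following boxes: (i) 0.19 < u0 < 0.20, 0.15 < u1 < 0.16, 0.17 < u2 = u3 < 0.18, 1.001 < x2 < 1.002, 0.186 < x3 < 0.187; (ii) 0.37 < u0 < 0.38, 0.21 < u1 < 0.22, 1.16 < u2 = u3 < 1.17, 1.008 < x2 < 1.009, 0.340 < x3 < 0.341; (iii) 0.84 < u0 < 0.85, 0.108 < u1 < 0.109, 0.178 < u2 = u3 < 0.179, 0.58 < x2 < 0.59, 1.14 < x3 < 1.15; (iv) 1.50 < u0 < 1.51, 1.40 < u1 < 1.41, 0.23 < u2 = u3 < 0.24,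 1.05 < x2 < 1.06, 1.48 < x3 < 1.49; (v) 2.36 < u0 < 2.37, 0.169 < u1 < 0.170, 0.26 < u2 = u3 < 0.27, 1.69 < x2 < 1.70, 2.35 < x3 < 2.36. (These give five non-isometric non-naturally reductive left-invariant Einstein metrics on E6 associated to the subgroup SU(3)xSU(3)xSU(2)xU(1).) -/
open Metric MvPolynomial
open scoped NNReal Matrix Matrix.Norms.Operator

/-!
Near each approximate solution `c` an exact one is produced by Newton's test with an approximate
inverse `A` of the Jacobian `J` at `c`: if `κ` bounds the linearization error of `f` on the ball of
radius `r` around `c`, then `A ∘ f` differs from the identity by a map with Lipschitz constant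
`‖A J - 1‖ + ‖A‖ κ`, and a zero lies within `r` of `c` as soon as `A (f c)` is small enough.

To control `κ`, each equation is written as a difference of two polynomials with nonnegative
coefficients. On a box `[0, b]` in the positive orthant all derivatives of these are monotone, so
the linearization error is governed by the value at the corner `b` of their second derivatives in
the direction `(1, …, 1)`.
-/

section ApproximateInverse

variable {E F : Type*} [NormedAddCommGroup E] [NormedSpace ℝ E] [NormedAddCommGroup F]
  [NormedSpace ℝ F] {f : E → F} {f' : E →L[ℝ] F} {s : Set E} {κ : ℝ≥0}

theorem approximatesLinearOn_id_of_comp (A : F →L[ℝ] E) (hf : ApproximatesLinearOn f f' s κ) :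
    ApproximatesLinearOn (A ∘ f) (ContinuousLinearMap.id ℝ E) s
      (‖A ∘L f' - ContinuousLinearMap.id ℝ E‖₊ + ‖A‖₊ * κ) := by
  intro x hx y hy
  have hsplit : A (f x) - A (f y) - (x - y) =
      (A ∘L f' - ContinuousLinearMap.id ℝ E) (x - y) + A (f x - f y - f' (x - y)) := by
    simp only [sub_apply, ContinuousLinearMap.comp_apply, ContinuousLinearMap.id_apply, map_sub]
    abel
  calc ‖A (f x) - A (f y) - (x - y)‖
      ≤ ‖A ∘L f' - ContinuousLinearMap.id ℝ E‖ * ‖x - y‖ + ‖A‖ * (κ * ‖x - y‖) :=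
        hsplit ▸ norm_add_le_of_le (ContinuousLinearMap.le_opNorm _ _)
          (A.le_opNorm_of_le (hf x hx y hy))
    _ = _ := by push_cast; ring

theorem exists_mem_closedBall_eq_zero [CompleteSpace E] {A : F →L[ℝ] E} {c : E} {r : ℝ}
    (hA : Function.Injective A) (hr : 0 ≤ r)
    (hf : ApproximatesLinearOn f f' (closedBall c r) κ)
    (hc : ‖A (f c)‖ ≤ (1 - (‖A ∘L f' - ContinuousLinearMap.id ℝ E‖ + ‖A‖ * κ)) * r) :
    ∃ x ∈ closedBall c r, f x = 0 := by
  let idInv : (ContinuousLinearMap.id ℝ E).NonlinearRightInverse :=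
    { toFun := id, nnnorm := 1, bound' := fun y => by simp, right_inv' := fun _ => rfl }
  have hzero : (0 : E) ∈ closedBall ((A ∘ f) c)
      (((idInv.nnnorm : ℝ)⁻¹ - ↑(‖A ∘L f' - ContinuousLinearMap.id ℝ E‖₊ + ‖A‖₊ * κ)) * r) := by
    simpa [idInv] using hc
  obtain ⟨x, hx, hAx⟩ := (approximatesLinearOn_id_of_comp A hf)
    |>.surjOn_closedBall_of_nonlinearRightInverse idInv hr subset_rfl hzero
  exact ⟨x, hx, hA (hAx.trans (map_zero A).symm)⟩

end ApproximateInverse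

theorem forall_lt_and_lt_of_mem_closedBall {ι : Type*} [Fintype ι] {c lo hi x : ι → ℝ} {r : ℝ}
    (hc : ∀ i, lo i + r < c i ∧ c i + r < hi i) (hx : x ∈ closedBall c r) (i : ι) :
    lo i < x i ∧ x i < hi i := by
  have hxi : |(x - c) i| ≤ r := (norm_le_pi_norm (x - c) i).trans (mem_closedBall_iff_norm.1 hx)
  obtain ⟨hlower, hupper⟩ := abs_sub_le_iff.1 hxi
  constructor <;> linarith [hc i]

section MatrixNorm

variable {m n : Type*} [Fintype m] [Fintype n]

theorem linfty_opNorm_le_of_sum_abs_le {A : Matrix m n ℝ} {a : ℝ} (ha : 0 ≤ a)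
    (h : ∀ i, ∑ j, |A i j| ≤ a) : ‖A‖ ≤ a := by
  lift a to ℝ≥0 using ha
  rw [Matrix.linfty_opNorm_def, NNReal.coe_le_coe]
  exact Finset.sup_le fun i _ => by simpa [← NNReal.coe_le_coe] using h i

theorem mulVec_injective_of_norm_mul_sub_one_lt_one [DecidableEq n] {A J : Matrix n n ℝ}
    (h : ‖A * J - 1‖ < 1) : Function.Injective A.mulVec := by
  have hunit : IsUnit (A * J) := by
    simpa using isUnit_one_sub_of_norm_lt_one (x := 1 - A * J) (by rwa [norm_sub_rev])
  exact Matrix.mulVec_injective_iff_isUnit.2 (isUnit_of_mul_isUnit_left hunit)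

theorem exists_mem_closedBall_eq_zero_of_matrix [DecidableEq n] {f : (n → ℝ) → n → ℝ}
    {A J : Matrix n n ℝ} {c : n → ℝ} {r : ℝ} {κ : ℝ≥0} (hr : 0 ≤ r)
    (hf : ApproximatesLinearOn f ⟨J.mulVecLin, by fun_prop⟩ (closedBall c r) κ)
    (hA : ‖A * J - 1‖ < 1)
    (hc : ‖A *ᵥ f c‖ ≤ (1 - (‖A * J - 1‖ + ‖A‖ * κ)) * r) :
    ∃ x ∈ closedBall c r, f x = 0 := by
  let A' : (n → ℝ) →L[ℝ] n → ℝ := ⟨A.mulVecLin, by fun_prop⟩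
  let J' : (n → ℝ) →L[ℝ] n → ℝ := ⟨J.mulVecLin, by fun_prop⟩
  have hA' : ‖A'‖ = ‖A‖ := A.linfty_opNorm_eq_opNorm.symm
  have hAJ' : ‖A' ∘L J' - ContinuousLinearMap.id ℝ (n → ℝ)‖ = ‖A * J - 1‖ := by
    rw [Matrix.linfty_opNorm_eq_opNorm]
    congr 1
    ext1 v
    change A *ᵥ (J *ᵥ v) - v = (A * J - 1) *ᵥ v
    rw [Matrix.mulVec_mulVec, Matrix.sub_mulVec, Matrix.one_mulVec]
  exact exists_mem_closedBall_eq_zero (A := A')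
    (mulVec_injective_of_norm_mul_sub_one_lt_one hA) hr hf (by rwa [hA', hAJ'])

end MatrixNorm

section NonnegCoeff

variable {σ : Type*}

/-- The derivative of a polynomial in the direction `(1, …, 1)`, i.e. the sum of its partial
derivatives. For nonnegative coefficients its values bound the Lipschitz constant in the sup
norm. -/
noncomputable def diagDeriv : Derivation ℝ≥0 (MvPolynomial σ ℝ≥0) (MvPolynomial σ ℝ≥0) :=
  mkDerivation ℝ≥0 fun _ => 1

theorem diagDeriv_mul_X (p : MvPolynomial σ ℝ≥0) (j : σ) :
    diagDeriv (p * X j) = p + X j * diagDeriv p := by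
  simp [diagDeriv, Derivation.leibniz, mkDerivation_X]

theorem aeval_nonneg {x : σ → ℝ} (hx : 0 ≤ x) (p : MvPolynomial σ ℝ≥0) : 0 ≤ aeval x p := by
  induction p using MvPolynomial.induction_on with
  | C a => simp [NNReal.algebraMap_eq_coe]
  | add p q hp hq => rw [map_add]; exact add_nonneg hp hq
  | mul_X p j hp => rw [map_mul, aeval_X]; exact mul_nonneg hp (hx j)

theorem aeval_le_aeval {x y : σ → ℝ} (hx : 0 ≤ x) (hxy : x ≤ y) (p : MvPolynomial σ ℝ≥0) :
    aeval x p ≤ aeval y p := by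
  induction p using MvPolynomial.induction_on with
  | C a => simp
  | add p q hp hq => simpa only [map_add] using add_le_add hp hq
  | mul_X p j hp =>
    simpa only [map_mul, aeval_X] using
      mul_le_mul hp (hxy j) (hx j) (aeval_nonneg (hx.trans hxy) p)

variable [Fintype σ] {b c x y : σ → ℝ} {r : ℝ}

theorem abs_aeval_sub_aeval_le (hx : x ∈ Set.Icc 0 b) (hy : y ∈ Set.Icc 0 b)
    (p : MvPolynomial σ ℝ≥0) :
    |aeval x p - aeval y p| ≤ aeval b (diagDeriv p) * ‖x - y‖ := by
  induction p using MvPolynomial.induction_on with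
  | C a => simp [diagDeriv]
  | add p q hp hq =>
    simp only [map_add, add_mul, add_sub_add_comm]
    exact (abs_add_le _ _).trans (add_le_add hp hq)
  | mul_X p j hp =>
    simp only [diagDeriv_mul_X, map_add, map_mul, aeval_X]
    have hxj : |x j| ≤ b j := by rw [abs_of_nonneg (hx.1 j)]; exact hx.2 j
    have hpy : |aeval y p| ≤ aeval b p := by
      rw [abs_of_nonneg (aeval_nonneg hy.1 p)]; exact aeval_le_aeval hy.1 hy.2 p
    have hxyj : |x j - y j| ≤ ‖x - y‖ := norm_le_pi_norm (x - y) j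
    calc |aeval x p * x j - aeval y p * y j|
        = |(aeval x p - aeval y p) * x j + aeval y p * (x j - y j)| := by congr 1; ring
      _ ≤ |aeval x p - aeval y p| * |x j| + |aeval y p| * |x j - y j| := by
        rw [← abs_mul, ← abs_mul]; exact abs_add_le _ _
      _ ≤ (aeval b (diagDeriv p) * ‖x - y‖) * b j + aeval b p * ‖x - y‖ := by
        gcongr <;> exact (abs_nonneg _).trans ‹_›
      _ = _ := by ring

theorem sum_aeval_pderiv_mul_X (p : MvPolynomial σ ℝ≥0) (j : σ) (v : σ → ℝ) :
    ∑ k, aeval c (pderiv k (p * X j)) * v k =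
      c j * ∑ k, aeval c (pderiv k p) * v k + aeval c p * v j := by
  classical
  have hterm (k : σ) : aeval c (pderiv k (p * X j)) * v k =
      c j * (aeval c (pderiv k p) * v k) + if k = j then aeval c p * v k else 0 := by
    rcases eq_or_ne k j with rfl | hkj
    · simp [Derivation.leibniz]; ring
    · simp [Derivation.leibniz, pderiv_X_of_ne hkj.symm, hkj, mul_assoc]
  simp_rw [hterm, Finset.sum_add_distrib, Finset.mul_sum, Finset.sum_ite_eq', Finset.mem_univ,
    if_true]

theorem abs_aeval_sub_aeval_sub_sum_pderiv_le (hx : x ∈ Set.Icc 0 b) (hy : y ∈ Set.Icc 0 b)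
    (hc : c ∈ Set.Icc 0 b) (hxc : ‖x - c‖ ≤ r) (hyc : ‖y - c‖ ≤ r) (p : MvPolynomial σ ℝ≥0) :
    |aeval x p - aeval y p - ∑ j, aeval c (pderiv j p) * (x j - y j)| ≤
      aeval b (diagDeriv (diagDeriv p)) * r * ‖x - y‖ := by
  induction p using MvPolynomial.induction_on with
  | C a => simp [diagDeriv]
  | add p q hp hq =>
    simp only [map_add, add_mul, Finset.sum_add_distrib, add_sub_add_comm]
    exact (abs_add_le _ _).trans (add_le_add hp hq)
  | mul_X p j hp =>
    have hD : diagDeriv (diagDeriv (p * X j)) =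
        X j * diagDeriv (diagDeriv p) + 2 * diagDeriv p := by
      rw [diagDeriv_mul_X, map_add, mul_comm (X j), diagDeriv_mul_X]; ring
    set R := aeval x p - aeval y p - ∑ k, aeval c (pderiv k p) * (x k - y k) with hR
    have hcj : |c j| ≤ b j := by rw [abs_of_nonneg (hc.1 j)]; exact hc.2 j
    have hxcj : |x j - c j| ≤ r := (norm_le_pi_norm (x - c) j).trans hxc
    have hxyj : |x j - y j| ≤ ‖x - y‖ := norm_le_pi_norm (x - y) j
    have hpnonneg : 0 ≤ aeval b (diagDeriv p) := aeval_nonneg (hx.1.trans hx.2) _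
    have hpxy := abs_aeval_sub_aeval_le hx hy p
    have hpyc : |aeval y p - aeval c p| ≤ aeval b (diagDeriv p) * r :=
      (abs_aeval_sub_aeval_le hy hc p).trans (by gcongr)
    rw [hD, sum_aeval_pderiv_mul_X p j fun k => x k - y k]
    simp only [map_add, map_mul, aeval_X, map_ofNat]
    calc |aeval x p * x j - aeval y p * y j -
          (c j * ∑ k, aeval c (pderiv k p) * (x k - y k) + aeval c p * (x j - y j))|
        = |R * c j + (aeval x p - aeval y p) * (x j - c j) +
            (aeval y p - aeval c p) * (x j - y j)| := by rw [hR]; congr 1; ring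
      _ ≤ |R| * |c j| + |aeval x p - aeval y p| * |x j - c j| +
            |aeval y p - aeval c p| * |x j - y j| := by
        simp only [← abs_mul]; exact abs_add_three _ _ _
      _ ≤ aeval b (diagDeriv (diagDeriv p)) * r * ‖x - y‖ * b j +
            aeval b (diagDeriv p) * ‖x - y‖ * r + aeval b (diagDeriv p) * r * ‖x - y‖ := by
        gcongr <;> exact (abs_nonneg _).trans ‹_›
      _ = _ := by ring

end NonnegCoeff

section PolyMap

variable {ι σ : Type*}

/-- The polynomial map whose `i`-th component is `P i - N i`. Splitting every component by the
signs of its coefficients lets `P` and `N` have nonnegative coefficients. -/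
noncomputable def polyMap (P N : ι → MvPolynomial σ ℝ≥0) (x : σ → ℝ) (i : ι) : ℝ :=
  aeval x (P i) - aeval x (N i)

/-- The Jacobian matrix of `polyMap P N` at a point. -/
noncomputable def jacobian (P N : ι → MvPolynomial σ ℝ≥0) (c : σ → ℝ) : Matrix ι σ ℝ :=
  Matrix.of fun i j => aeval c (pderiv j (P i)) - aeval c (pderiv j (N i))

variable [Fintype ι] [Fintype σ] {P N : ι → MvPolynomial σ ℝ≥0} {b c : σ → ℝ} {K r : ℝ≥0}

theorem approximatesLinearOn_polyMap (hball : closedBall c r ⊆ Set.Icc 0 b)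
    (hK : ∀ i, aeval b (diagDeriv (diagDeriv (P i + N i))) ≤ K) :
    ApproximatesLinearOn (polyMap P N) ⟨(jacobian P N c).mulVecLin, by fun_prop⟩
      (closedBall c r) (K * r) := by
  intro x hx y hy
  have hlin := abs_aeval_sub_aeval_sub_sum_pderiv_le (hball hx) (hball hy)
    (hball (mem_closedBall_self r.2)) (mem_closedBall_iff_norm.1 hx) (mem_closedBall_iff_norm.1 hy)
  refine (pi_norm_le_iff_of_nonneg (by positivity)).2 fun i => ?_
  have hcoord : (polyMap P N x - polyMap P N y - jacobian P N c *ᵥ (x - y)) i =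
      (aeval x (P i) - aeval y (P i) - ∑ j, aeval c (pderiv j (P i)) * (x j - y j)) -
        (aeval x (N i) - aeval y (N i) - ∑ j, aeval c (pderiv j (N i)) * (x j - y j)) := by
    simp only [polyMap, jacobian, Pi.sub_apply, Matrix.mulVec, dotProduct, Matrix.of_apply, sub_mul,
      Finset.sum_sub_distrib]
    ring
  calc ‖(polyMap P N x - polyMap P N y - jacobian P N c *ᵥ (x - y)) i‖
      ≤ aeval b (diagDeriv (diagDeriv (P i))) * r * ‖x - y‖ +
          aeval b (diagDeriv (diagDeriv (N i))) * r * ‖x - y‖ := by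
        rw [hcoord]
        exact norm_sub_le_of_le (hlin _) (hlin _)
    _ = aeval b (diagDeriv (diagDeriv (P i + N i))) * r * ‖x - y‖ := by
        simp only [map_add, add_mul]
    _ ≤ K * r * ‖x - y‖ := by gcongr; exact hK i
    _ = ↑(K * r) * ‖x - y‖ := by push_cast; rfl

end PolyMap

section Einstein

/-- The terms with positive coefficient of `g0`, `g1`, `g3`, `g4`, `g5` restricted to `u2 = u3`, in
the variables `X 0 = u0`, `X 1 = u1`, `X 2 = u2 = u3`, `X 3 = x2`, `X 4 = x3`. The polynomial `g2`
is left out because it vanishes identically on `u2 = u3`. -/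
noncomputable def einsteinPos : Fin 5 → MvPolynomial (Fin 5) ℝ≥0 :=
  ![
    3 * X 0 * X 1 * X 3 ^ 2 * X 4 ^ 2 + 3 * X 0 * X 1 * X 3 ^ 2 + 6 * X 0 * X 1 * X 4 ^ 2,
    9 * X 1 ^ 2 * X 2 * X 3 ^ 2 * X 4 ^ 2 + X 1 ^ 2 * X 2 * X 3 ^ 2 + 2 * X 2 * X 3 ^ 2 * X 4 ^ 2,
    X 0 * X 2 * X 3 ^ 2 * X 4 + 9 * X 1 * X 2 * X 3 ^ 2 * X 4 + 68 * X 2 ^ 2 * X 3 ^ 2 * X 4 +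
      18 * X 2 ^ 2 * X 4 + 24 * X 2 * X 3 ^ 3 * X 4 + 6 * X 2 * X 3 ^ 3 + 6 * X 2 * X 3 * X 4 ^ 2 +
      18 * X 3 ^ 2 * X 4,
    4 * X 0 * X 4 + 32 * X 2 * X 4 + 144 * X 3 ^ 2 * X 4 + 6 * X 3 * X 4 ^ 2 + 18 * X 3,
    9 * X 0 * X 3 ^ 2 + 9 * X 1 * X 3 ^ 2 + 24 * X 3 ^ 3 * X 4 ^ 2 + 66 * X 3 ^ 3 * X 4 +
      96 * X 3 * X 4 ^ 2 + 42 * X 3 * X 4]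

/-- The terms with negative coefficient, with their signs reversed, of the polynomials described at
`einsteinPos`. -/
noncomputable def einsteinNeg : Fin 5 → MvPolynomial (Fin 5) ℝ≥0 :=
  ![
    9 * X 1 ^ 2 * X 3 ^ 2 * X 4 ^ 2 + X 1 ^ 2 * X 3 ^ 2 + 2 * X 3 ^ 2 * X 4 ^ 2,
    6 * X 1 * X 2 ^ 2 * X 3 ^ 2 * X 4 ^ 2 + 3 * X 1 * X 2 ^ 2 * X 4 ^ 2 +
      3 * X 1 * X 3 ^ 2 * X 4 ^ 2,
    144 * X 2 * X 3 ^ 2 * X 4 + 6 * X 2 * X 3,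
    X 0 * X 3 ^ 2 * X 4 + 9 * X 1 * X 3 ^ 2 * X 4 + 32 * X 2 * X 3 ^ 2 * X 4 + 48 * X 3 ^ 3 * X 4 +
      18 * X 3 ^ 3 + 96 * X 3 * X 4,
    4 * X 0 * X 4 ^ 2 + 32 * X 2 * X 4 ^ 2 + 144 * X 3 ^ 2 * X 4 + 66 * X 3 * X 4 ^ 3]

theorem polyMap_einstein (x : Fin 5 → ℝ) :
    polyMap einsteinPos einsteinNeg x =
      ![g0 (x 0) (x 1) (x 2) (x 2) (x 3) (x 4), g1 (x 0) (x 1) (x 2) (x 2) (x 3) (x 4),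
        g3 (x 0) (x 1) (x 2) (x 2) (x 3) (x 4), g4 (x 0) (x 1) (x 2) (x 2) (x 3) (x 4),
        g5 (x 0) (x 1) (x 2) (x 2) (x 3) (x 4)] := by
  ext i
  fin_cases i <;> simp [polyMap, einsteinPos, einsteinNeg, g0, g1, g3, g4, g5] <;> ring

theorem derivation_ofNat {σ R M : Type*} [CommSemiring R] [AddCommMonoid M] [Module R M]
    [Module (MvPolynomial σ R) M] (D : Derivation R (MvPolynomial σ R) M) (n : ℕ)
    [n.AtLeastTwo] : D ofNat(n) = 0 := by
  rw [← map_ofNat C n, derivation_C]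

theorem jacobian_einstein (x : Fin 5 → ℝ) :
    jacobian einsteinPos einsteinNeg x = !![
    3 * x 1 * x 3 ^ 2 * x 4 ^ 2 + 3 * x 1 * x 3 ^ 2 + 6 * x 1 * x 4 ^ 2,
    3 * x 0 * x 3 ^ 2 * x 4 ^ 2 + 3 * x 0 * x 3 ^ 2 + 6 * x 0 * x 4 ^ 2 -
      18 * x 1 * x 3 ^ 2 * x 4 ^ 2 - 2 * x 1 * x 3 ^ 2,
    0,
    6 * x 0 * x 1 * x 3 * x 4 ^ 2 + 6 * x 0 * x 1 * x 3 - 18 * x 1 ^ 2 * x 3 * x 4 ^ 2 -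
      2 * x 1 ^ 2 * x 3 - 4 * x 3 * x 4 ^ 2,
    6 * x 0 * x 1 * x 3 ^ 2 * x 4 + 12 * x 0 * x 1 * x 4 - 18 * x 1 ^ 2 * x 3 ^ 2 * x 4 -
      4 * x 3 ^ 2 * x 4;
    0,
    18 * x 1 * x 2 * x 3 ^ 2 * x 4 ^ 2 + 2 * x 1 * x 2 * x 3 ^ 2 -
      6 * x 2 ^ 2 * x 3 ^ 2 * x 4 ^ 2 - 3 * x 2 ^ 2 * x 4 ^ 2 - 3 * x 3 ^ 2 * x 4 ^ 2,
    9 * x 1 ^ 2 * x 3 ^ 2 * x 4 ^ 2 + x 1 ^ 2 * x 3 ^ 2 - 12 * x 1 * x 2 * x 3 ^ 2 * x 4 ^ 2 -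
      6 * x 1 * x 2 * x 4 ^ 2 + 2 * x 3 ^ 2 * x 4 ^ 2,
    18 * x 1 ^ 2 * x 2 * x 3 * x 4 ^ 2 + 2 * x 1 ^ 2 * x 2 * x 3 -
      12 * x 1 * x 2 ^ 2 * x 3 * x 4 ^ 2 - 6 * x 1 * x 3 * x 4 ^ 2 + 4 * x 2 * x 3 * x 4 ^ 2,
    18 * x 1 ^ 2 * x 2 * x 3 ^ 2 * x 4 - 12 * x 1 * x 2 ^ 2 * x 3 ^ 2 * x 4 -
      6 * x 1 * x 2 ^ 2 * x 4 - 6 * x 1 * x 3 ^ 2 * x 4 + 4 * x 2 * x 3 ^ 2 * x 4;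
    x 2 * x 3 ^ 2 * x 4,
    9 * x 2 * x 3 ^ 2 * x 4,
    x 0 * x 3 ^ 2 * x 4 + 9 * x 1 * x 3 ^ 2 * x 4 + 136 * x 2 * x 3 ^ 2 * x 4 + 36 * x 2 * x 4 +
      24 * x 3 ^ 3 * x 4 + 6 * x 3 ^ 3 - 144 * x 3 ^ 2 * x 4 + 6 * x 3 * x 4 ^ 2 - 6 * x 3,
    2 * x 0 * x 2 * x 3 * x 4 + 18 * x 1 * x 2 * x 3 * x 4 + 136 * x 2 ^ 2 * x 3 * x 4 +
      72 * x 2 * x 3 ^ 2 * x 4 + 18 * x 2 * x 3 ^ 2 - 288 * x 2 * x 3 * x 4 + 6 * x 2 * x 4 ^ 2 -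
      6 * x 2 + 36 * x 3 * x 4,
    x 0 * x 2 * x 3 ^ 2 + 9 * x 1 * x 2 * x 3 ^ 2 + 68 * x 2 ^ 2 * x 3 ^ 2 + 18 * x 2 ^ 2 +
      24 * x 2 * x 3 ^ 3 - 144 * x 2 * x 3 ^ 2 + 12 * x 2 * x 3 * x 4 + 18 * x 3 ^ 2;
    -x 3 ^ 2 * x 4 + 4 * x 4,
    -9 * x 3 ^ 2 * x 4,
    -32 * x 3 ^ 2 * x 4 + 32 * x 4,
    -2 * x 0 * x 3 * x 4 - 18 * x 1 * x 3 * x 4 - 64 * x 2 * x 3 * x 4 - 144 * x 3 ^ 2 * x 4 -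
      54 * x 3 ^ 2 + 288 * x 3 * x 4 + 6 * x 4 ^ 2 - 96 * x 4 + 18,
    -x 0 * x 3 ^ 2 + 4 * x 0 - 9 * x 1 * x 3 ^ 2 - 32 * x 2 * x 3 ^ 2 + 32 * x 2 - 48 * x 3 ^ 3 +
      144 * x 3 ^ 2 + 12 * x 3 * x 4 - 96 * x 3;
    9 * x 3 ^ 2 - 4 * x 4 ^ 2,
    9 * x 3 ^ 2,
    -32 * x 4 ^ 2,
    18 * x 0 * x 3 + 18 * x 1 * x 3 + 72 * x 3 ^ 2 * x 4 ^ 2 + 198 * x 3 ^ 2 * x 4 -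
      288 * x 3 * x 4 - 66 * x 4 ^ 3 + 96 * x 4 ^ 2 + 42 * x 4,
    -8 * x 0 * x 4 - 64 * x 2 * x 4 + 48 * x 3 ^ 3 * x 4 + 66 * x 3 ^ 3 - 144 * x 3 ^ 2 -
      198 * x 3 * x 4 ^ 2 + 192 * x 3 * x 4 + 42 * x 3] := by
  ext i j
  fin_cases i <;> fin_cases j <;>
    simp only [jacobian, einsteinPos, einsteinNeg, Fin.reduceFinMk, Fin.zero_eta, Fin.mk_one,
      Fin.isValue, Fin.reduceEq, Matrix.of_apply, Matrix.cons_val, Derivation.leibniz,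
      Derivation.leibniz_pow, derivation_ofNat, pderiv_X, Pi.single_eq_same, Pi.single_eq_of_ne,
      ne_eq, not_false_eq_true, smul_eq_mul, nsmul_eq_mul, map_add, map_mul, map_pow, map_zero,
      Nat.cast_ofNat, Nat.add_one_sub_one, aeval_X, aeval_ofNat, pow_one, mul_one, mul_zero,
      add_zero, zero_add] <;>
    ring

theorem aeval_diagDeriv_diagDeriv_einstein_le (i : Fin 5) :
    aeval (fun _ => (3 : ℝ)) (diagDeriv (diagDeriv (einsteinPos i + einsteinNeg i))) ≤ 160000 := by
  fin_cases i <;>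
    norm_num [diagDeriv, einsteinPos, einsteinNeg, Derivation.leibniz, Derivation.leibniz_pow,
      derivation_ofNat]

/-- The Einstein equations, in the variables described at `einsteinPos`, have a solution in the open
box with opposite corners `lo` and `hi`. -/
def HasEinsteinZeroIn (lo hi : Fin 5 → ℝ) : Prop :=
  ∃ x, (∀ i, lo i < x i ∧ x i < hi i) ∧ polyMap einsteinPos einsteinNeg x = 0

theorem HasEinsteinZeroIn.exists_eq_zero {lo hi : Fin 5 → ℝ} (h : HasEinsteinZeroIn lo hi) :
    ∃ u0 u1 u2 u3 x2 x3 : ℝ,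
      u2 = u3 ∧ lo 0 < u0 ∧ u0 < hi 0 ∧ lo 1 < u1 ∧ u1 < hi 1 ∧ lo 2 < u2 ∧ u2 < hi 2 ∧
      lo 3 < x2 ∧ x2 < hi 3 ∧ lo 4 < x3 ∧ x3 < hi 4 ∧
      g0 u0 u1 u2 u3 x2 x3 = 0 ∧ g1 u0 u1 u2 u3 x2 x3 = 0 ∧ g2 u0 u1 u2 u3 x2 x3 = 0 ∧
      g3 u0 u1 u2 u3 x2 x3 = 0 ∧ g4 u0 u1 u2 u3 x2 x3 = 0 ∧ g5 u0 u1 u2 u3 x2 x3 = 0 := by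
  obtain ⟨x, hbox, hx⟩ := h
  rw [polyMap_einstein] at hx
  exact ⟨x 0, x 1, x 2, x 2, x 3, x 4, rfl, (hbox 0).1, (hbox 0).2, (hbox 1).1, (hbox 1).2,
    (hbox 2).1, (hbox 2).2, (hbox 3).1, (hbox 3).2, (hbox 4).1, (hbox 4).2,
    congrFun hx 0, congrFun hx 1, by simp [g2], congrFun hx 2, congrFun hx 3, congrFun hx 4⟩

/- With `‖A‖ ≤ 100`, the second-derivative bound `160000` and radius `10⁻⁸`, the Lipschitz constant
of Newton's test is at most `1 / 4 + 100 * 160000 * 10⁻⁸ < 1 / 2`. -/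
theorem hasEinsteinZeroIn_of_approximateInverse {A : Matrix (Fin 5) (Fin 5) ℝ}
    {c lo hi : Fin 5 → ℝ} (hlohi : ∀ i, 0 ≤ lo i ∧ hi i ≤ 3)
    (hc : ∀ i, lo i + 1 / 10 ^ 8 < c i ∧ c i + 1 / 10 ^ 8 < hi i)
    (hA : ∀ i, ∑ j, |A i j| ≤ 100)
    (hAJ : ∀ i, ∑ j, |(A * jacobian einsteinPos einsteinNeg c - 1) i j| ≤ 1 / 4)
    (hAc : ∀ i, |(A *ᵥ polyMap einsteinPos einsteinNeg c) i| ≤ 1 / (2 * 10 ^ 8)) :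
    HasEinsteinZeroIn lo hi := by
  let r : ℝ≥0 := 1 / 10 ^ 8
  have hr : (r : ℝ) = 1 / 10 ^ 8 := by simp [r]
  rw [← hr] at hc
  have hbox {x : Fin 5 → ℝ} (hx : x ∈ closedBall c r) := forall_lt_and_lt_of_mem_closedBall hc hx
  have hball : closedBall c r ⊆ Set.Icc 0 fun _ => 3 := fun x hx =>
    ⟨fun i => (hlohi i).1.trans (hbox hx i).1.le, fun i => (hbox hx i).2.le.trans (hlohi i).2⟩
  have hA' : ‖A‖ ≤ 100 := linfty_opNorm_le_of_sum_abs_le (by norm_num) hA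
  have hAJ' : ‖A * jacobian einsteinPos einsteinNeg c - 1‖ ≤ 1 / 4 :=
    linfty_opNorm_le_of_sum_abs_le (by norm_num) hAJ
  have hAc' : ‖A *ᵥ polyMap einsteinPos einsteinNeg c‖ ≤ 1 / (2 * 10 ^ 8) :=
    (pi_norm_le_iff_of_nonneg (by norm_num)).2 hAc
  obtain ⟨x, hx, hzero⟩ := exists_mem_closedBall_eq_zero_of_matrix r.coe_nonneg
    (approximatesLinearOn_polyMap (K := 160000) hball aeval_diagDeriv_diagDeriv_einstein_le)
    (hAJ'.trans_lt (by norm_num)) (hAc'.trans (by push_cast; rw [hr]; linarith))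
  exact ⟨x, hbox hx, hzero⟩

/- Here and below, `c` is a root found by Newton iteration, rounded to nine decimals, and `A` is the
inverse of the Jacobian at `c`, rounded to a few decimals. -/
theorem hasEinsteinZeroIn_box_one :
    HasEinsteinZeroIn ![0.19, 0.15, 0.17, 1.001, 0.186] ![0.20, 0.16, 0.18, 1.002, 0.187] := by
  refine hasEinsteinZeroIn_of_approximateInverse
    (c := ![0.194866198, 0.159247074, 0.176592784, 1.001695739, 0.186397133])
    (A := !![-3.3, 49.12, 0.24, 0.05, 0.3;
      3.21, -48.64, -0.24, -0.04, -0.19;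
      -0.04, 0.2, -0.06, -0.01, 0;
      -0.38, 4.67, 0.02, -0.03, 0.02;
      -2.76, 20.35, 0.1, 0.03, 0.16]) ?_ ?_ ?_ ?_ ?_
  <;> intro i <;> fin_cases i
  <;> simp [jacobian_einstein, polyMap_einstein, g0, g1, g3, g4, g5, Matrix.mulVec, dotProduct,
    Fin.sum_univ_five]
  <;> norm_num

theorem hasEinsteinZeroIn_box_two :
    HasEinsteinZeroIn ![0.37, 0.21, 1.16, 1.008, 0.340] ![0.38, 0.22, 1.17, 1.009, 0.341] := by
  refine hasEinsteinZeroIn_of_approximateInverse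
    (c := ![0.373936724, 0.219196592, 1.162664121, 1.008751946, 0.340824793])
    (A := !![-0.734, 1.597, 0.035, 0.059, 0.182;
      0.477, -1.545, -0.017, -0.022, -0.046;
      0.057, 0.107, 0.034, 0.003, -0.008;
      -0.12, 0.161, 0.003, -0.016, 0.014;
      -1.143, 0.387, 0.017, 0.035, 0.113]) ?_ ?_ ?_ ?_ ?_
  <;> intro i <;> fin_cases i
  <;> simp [jacobian_einstein, polyMap_einstein, g0, g1, g3, g4, g5, Matrix.mulVec, dotProduct,
    Fin.sum_univ_five]
  <;> norm_num

theorem hasEinsteinZeroIn_box_three :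
    HasEinsteinZeroIn ![0.84, 0.108, 0.178, 0.58, 1.14] ![0.85, 0.109, 0.179, 0.59, 1.15] := by
  refine hasEinsteinZeroIn_of_approximateInverse
    (c := ![0.842128925, 0.108721900, 0.178610963, 0.580582970, 1.140807664])
    (A := !![0.65, 3.53, 0.133, 0.065, -0.002;
      -0.003, -0.763, -0.016, 0.001, 0;
      0.002, -0.002, -0.032, 0, -0.001;
      -0.122, -0.761, 0.009, 0.032, -0.001;
      -0.04, -0.257, 0.023, -0.001, -0.022]) ?_ ?_ ?_ ?_ ?_
  <;> intro i <;> fin_cases i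
  <;> simp [jacobian_einstein, polyMap_einstein, g0, g1, g3, g4, g5, Matrix.mulVec, dotProduct,
    Fin.sum_univ_five]
  <;> norm_num

theorem hasEinsteinZeroIn_box_four :
    HasEinsteinZeroIn ![1.50, 1.40, 0.23, 1.05, 1.48] ![1.51, 1.41, 0.24, 1.06, 1.49] := by
  refine hasEinsteinZeroIn_of_approximateInverse
    (c := ![1.504626830, 1.401769193, 0.237839211, 1.055044184, 1.481209582])
    (A := !![0.092, -0.487, -0.137, -0.461, -0.036;
      -0.022, 0.321, 0.108, 0.157, 0.012;
      0.004, -0.03, -0.019, -0.027, -0.002;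
      0.046, -0.431, -0.13, -0.336, -0.025;
      0.047, -0.434, -0.126, -0.344, -0.032]) ?_ ?_ ?_ ?_ ?_
  <;> intro i <;> fin_cases i
  <;> simp [jacobian_einstein, polyMap_einstein, g0, g1, g3, g4, g5, Matrix.mulVec, dotProduct,
    Fin.sum_univ_five]
  <;> norm_num

theorem hasEinsteinZeroIn_box_five :
    HasEinsteinZeroIn ![2.36, 0.169, 0.26, 1.69, 2.35] ![2.37, 0.170, 0.27, 1.70, 2.36] := by
  refine hasEinsteinZeroIn_of_approximateInverse
    (c := ![2.365357217, 0.169897894, 0.261067745, 1.691556217, 2.358773976])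
    (A := !![0.0636, 0.2547, 0.021, -0.0023, -0.0003;
      0.0003, -0.0225, -0.0015, -0.0005, 0;
      0.0004, 0.0017, -0.0025, -0.0007, -0.0001;
      0.0006, 0.011, 0.0033, -0.0053, -0.0004;
      0.0014, 0.0198, 0.0066, -0.0094, -0.0022]) ?_ ?_ ?_ ?_ ?_
  <;> intro i <;> fin_cases i
  <;> simp [jacobian_einstein, polyMap_einstein, g0, g1, g3, g4, g5, Matrix.mulVec, dotProduct,
    Fin.sum_univ_five]
  <;> norm_num

end Einstein

theorem stmt19 :
    (∃ u0 u1 u2 u3 x2 x3 : ℝ,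
      u2 = u3 ∧ 0.19 < u0 ∧ u0 < 0.20 ∧ 0.15 < u1 ∧ u1 < 0.16 ∧ 0.17 < u2 ∧ u2 < 0.18 ∧ 1.001 < x2 ∧ x2 < 1.002 ∧ 0.186 < x3 ∧ x3 < 0.187 ∧
      g0 u0 u1 u2 u3 x2 x3 = 0 ∧ g1 u0 u1 u2 u3 x2 x3 = 0 ∧ g2 u0 u1 u2 u3 x2 x3 = 0 ∧ g3 u0 u1 u2 u3 x2 x3 = 0 ∧ g4 u0 u1 u2 u3 x2 x3 = 0 ∧ g5 u0 u1 u2 u3 x2 x3 = 0) ∧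
    (∃ u0 u1 u2 u3 x2 x3 : ℝ,
      u2 = u3 ∧ 0.37 < u0 ∧ u0 < 0.38 ∧ 0.21 < u1 ∧ u1 < 0.22 ∧ 1.16 < u2 ∧ u2 < 1.17 ∧ 1.008 < x2 ∧ x2 < 1.009 ∧ 0.340 < x3 ∧ x3 < 0.341 ∧
      g0 u0 u1 u2 u3 x2 x3 = 0 ∧ g1 u0 u1 u2 u3 x2 x3 = 0 ∧ g2 u0 u1 u2 u3 x2 x3 = 0 ∧ g3 u0 u1 u2 u3 x2 x3 = 0 ∧ g4 u0 u1 u2 u3 x2 x3 = 0 ∧ g5 u0 u1 u2 u3 x2 x3 = 0) ∧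
    (∃ u0 u1 u2 u3 x2 x3 : ℝ,
      u2 = u3 ∧ 0.84 < u0 ∧ u0 < 0.85 ∧ 0.108 < u1 ∧ u1 < 0.109 ∧ 0.178 < u2 ∧ u2 < 0.179 ∧ 0.58 < x2 ∧ x2 < 0.59 ∧ 1.14 < x3 ∧ x3 < 1.15 ∧
      g0 u0 u1 u2 u3 x2 x3 = 0 ∧ g1 u0 u1 u2 u3 x2 x3 = 0 ∧ g2 u0 u1 u2 u3 x2 x3 = 0 ∧ g3 u0 u1 u2 u3 x2 x3 = 0 ∧ g4 u0 u1 u2 u3 x2 x3 = 0 ∧ g5 u0 u1 u2 u3 x2 x3 = 0) ∧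
    (∃ u0 u1 u2 u3 x2 x3 : ℝ,
      u2 = u3 ∧ 1.50 < u0 ∧ u0 < 1.51 ∧ 1.40 < u1 ∧ u1 < 1.41 ∧ 0.23 < u2 ∧ u2 < 0.24 ∧ 1.05 < x2 ∧ x2 < 1.06 ∧ 1.48 < x3 ∧ x3 < 1.49 ∧
      g0 u0 u1 u2 u3 x2 x3 = 0 ∧ g1 u0 u1 u2 u3 x2 x3 = 0 ∧ g2 u0 u1 u2 u3 x2 x3 = 0 ∧ g3 u0 u1 u2 u3 x2 x3 = 0 ∧ g4 u0 u1 u2 u3 x2 x3 = 0 ∧ g5 u0 u1 u2 u3 x2 x3 = 0) ∧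
    (∃ u0 u1 u2 u3 x2 x3 : ℝ,
      u2 = u3 ∧ 2.36 < u0 ∧ u0 < 2.37 ∧ 0.169 < u1 ∧ u1 < 0.170 ∧ 0.26 < u2 ∧ u2 < 0.27 ∧ 1.69 < x2 ∧ x2 < 1.70 ∧ 2.35 < x3 ∧ x3 < 2.36 ∧
      g0 u0 u1 u2 u3 x2 x3 = 0 ∧ g1 u0 u1 u2 u3 x2 x3 = 0 ∧ g2 u0 u1 u2 u3 x2 x3 = 0 ∧ g3 u0 u1 u2 u3 x2 x3 = 0 ∧ g4 u0 u1 u2 u3 x2 x3 = 0 ∧ g5 u0 u1 u2 u3 x2 x3 = 0) :=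
  ⟨hasEinsteinZeroIn_box_one.exists_eq_zero, hasEinsteinZeroIn_box_two.exists_eq_zero,
    hasEinsteinZeroIn_box_three.exists_eq_zero, hasEinsteinZeroIn_box_four.exists_eq_zero,
    hasEinsteinZeroIn_box_five.exists_eq_zero⟩
end
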